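/- In the AR identification setup, let δ = (δ₁, δ₂, …, δ_{p+1}) ∈ ℝ^{p+1} be such that (δ₂, …, δ_{p+1}) ≠ (0, …, 0). Then P(δ₁ + Σ_{j=1}^p δ_{j+1} y_{t−j} ≥ 0) < 1 and P(δ₁ + Σ_{j=1}^p δ_{j+1} y_{t−j} ≤ 0) < 1. -/

import Mathlib

open MeasureTheory Set

/-- A real-valued random variable `ε` has *full conditional support* given a
sub-σ-algebra `m` if for every `m`-measurable set `A` of positive probability and
every nonempty open interval `(a, b)`, the event `A ∩ {ε ∈ (a, b)}` has positive
probability. -/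
def FullCondSupport {Ω : Type*} {mΩ : MeasurableSpace Ω} (P : Measure Ω)
    (m : MeasurableSpace Ω) (ε : Ω → ℝ) : Prop :=
  ∀ A : Set Ω, MeasurableSet[m] A → 0 < P A →
    ∀ a b : ℝ, a < b → 0 < P (A ∩ {ω | ε ω ∈ Set.Ioo a b})

/-!
The most recent lag `y s` with a nonzero coefficient equals `W s + ε s`, and every other term of the
combination with a nonzero coefficient is older, hence known given `𝔊 (s - 1)`. Full conditional
support given a σ-algebra survives nonzero scaling and the addition of a variable measurable with
respect to that σ-algebra, so the whole combination has full conditional support given `𝔊 (s - 1)`;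
in particular it charges both `(-1, 0)` and `(0, 1)`.
-/

namespace FullCondSupport

variable {Ω : Type*} {m mΩ : MeasurableSpace Ω} {P : Measure Ω} {ε : Ω → ℝ}

theorem const_mul (hε : FullCondSupport P m ε) {c : ℝ} (hc : c ≠ 0) :
    FullCondSupport P m (fun ω => c * ε ω) := by
  intro A hA hPA a b hab
  rcases hc.lt_or_gt with hneg | hpos
  · refine (hε A hA hPA (b / c) (a / c) ((div_lt_div_right_of_neg hneg).2 hab)).trans_le
      (measure_mono ?_)
    rintro ω ⟨hωA, hlower, hupper⟩
    exact ⟨hωA, (lt_div_iff_of_neg' hneg).1 hupper, (div_lt_iff_of_neg' hneg).1 hlower⟩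
  · refine (hε A hA hPA (a / c) (b / c) (div_lt_div_of_pos_right hab hpos)).trans_le
      (measure_mono ?_)
    rintro ω ⟨hωA, hlower, hupper⟩
    exact ⟨hωA, (div_lt_iff₀' hpos).1 hlower, (lt_div_iff₀' hpos).1 hupper⟩

theorem measurable_add (hε : FullCondSupport P m ε) {V : Ω → ℝ} (hV : Measurable[m] V) :
    FullCondSupport P m (fun ω => V ω + ε ω) := by
  intro A hA hPA a b hab
  -- If `V` is within `r` of a rational `q`, then `V + ε` is in `(a, b)` as soon as `ε` is in
  -- `(a - q + r, b - q - r)`, an interval of length `r`.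
  obtain ⟨r, hr⟩ : ∃ r : ℝ, r = (b - a) / 3 := ⟨_, rfl⟩
  have hr_pos : 0 < r := by linarith
  obtain ⟨q, hq⟩ : ∃ q : ℚ, 0 < P (A ∩ V ⁻¹' Ioo (q - r) (q + r)) := by
    refine exists_measure_pos_of_not_measure_iUnion_null fun hnull => hPA.ne' ?_
    refine measure_mono_null (fun ω hω => ?_) hnull
    obtain ⟨q, hlower, hupper⟩ := exists_rat_btwn (show V ω - r < V ω + r by linarith)
    exact mem_iUnion.2 ⟨q, hω, by linarith, by linarith⟩
  have hB : MeasurableSet[m] (A ∩ V ⁻¹' Ioo (q - r) (q + r)) := hA.inter (hV measurableSet_Ioo)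
  refine (hε _ hB hq (a - q + r) (b - q - r) (by linarith)).trans_le (measure_mono ?_)
  rintro ω ⟨⟨hωA, hVlower, hVupper⟩, hεlower, hεupper⟩
  exact ⟨hωA, by linarith, by linarith⟩

theorem finset_sum_const_mul {ι : Type*} {s : Finset ι} {x : ι → Ω → ℝ} {c : ι → ℝ} {i : ι}
    (hi : i ∈ s) (hxi : FullCondSupport P m (x i)) (hci : c i ≠ 0)
    (hxm : ∀ j ∈ s, j ≠ i → c j ≠ 0 → Measurable[m] (x j)) :
    FullCondSupport P m (fun ω => ∑ j ∈ s, c j * x j ω) := by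
  classical
  have hrest : Measurable[m] (fun ω => ∑ j ∈ s.erase i, c j * x j ω) := by
    refine Finset.measurable_fun_sum _ fun j hj => ?_
    obtain ⟨hji, hjs⟩ := Finset.mem_erase.1 hj
    by_cases hcj : c j = 0
    · simp only [hcj, zero_mul, measurable_const]
    · exact (hxm j hjs hji hcj).const_mul _
  simpa only [Finset.sum_erase_add _ _ hi] using (hxi.const_mul hci).measurable_add hrest

theorem exists_sum_const_mul {ι : Type*} [Fintype ι] [LinearOrder ι] {𝓕 : ι → MeasurableSpace Ω}
    {x : ι → Ω → ℝ} {c : ι → ℝ} (hx : ∀ i, FullCondSupport P (𝓕 i) (x i))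
    (hxm : ∀ i j, i < j → Measurable[𝓕 i] (x j)) (hc : c ≠ 0) :
    ∃ i, FullCondSupport P (𝓕 i) (fun ω => ∑ j, c j * x j ω) := by
  obtain ⟨i, hci, hi_min⟩ :=
    exists_minimal_of_wellFoundedLT (fun j => c j ≠ 0) (Function.ne_iff.1 hc)
  refine ⟨i, (hx i).finset_sum_const_mul (Finset.mem_univ i) hci fun j _ hji hcj => hxm i j ?_⟩
  exact lt_of_not_ge fun hle => hji (le_antisymm hle (hi_min hcj hle))

theorem prob_preimage_lt_one [IsProbabilityMeasure P] (hε : FullCondSupport P m ε)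
    (hεm : AEMeasurable ε P) {B : Set ℝ} {a b : ℝ} (hab : a < b) (hB : Disjoint B (Ioo a b)) :
    P (ε ⁻¹' B) < 1 := by
  have hpos : 0 < P (ε ⁻¹' Ioo a b) := by
    simpa only [univ_inter] using! hε univ MeasurableSet.univ (by simp) a b hab
  calc P (ε ⁻¹' B) ≤ P (ε ⁻¹' Ioo a b)ᶜ :=
        measure_mono (preimage_mono hB.subset_compl_right)
    _ = 1 - P (ε ⁻¹' Ioo a b) :=
        prob_compl_eq_one_sub₀ (hεm.nullMeasurableSet_preimage measurableSet_Ioo)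
    _ < 1 := ENNReal.sub_lt_self ENNReal.one_ne_top one_ne_zero hpos.ne'

end FullCondSupport

/-- AR identification setup: in the filtration `𝔊`, each `y s = W s + ε s`
(`s = t-p, …, t-1`) with `y s` being `𝔊 s`-measurable, `W s` being
`𝔊 (s-1)`-measurable, and `ε s` having full conditional support given `𝔊 (s-1)`.
If some lag coefficient `δ j` is nonzero, then the linear combination
`δ₁ + ∑_{j=1}^p δ_{j+1} y_{t-j}` is neither a.s. nonnegative nor a.s. nonpositive. -/
theorem stmt_2 {Ω : Type*} [inst : MeasurableSpace Ω] (P : Measure Ω)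
    [IsProbabilityMeasure P]
    (p : ℕ) (hp : 1 ≤ p) (t : ℤ)
    (𝔊 : ℤ → MeasurableSpace Ω)
    (h𝔊mono : Monotone 𝔊) (h𝔊le : ∀ s : ℤ, 𝔊 s ≤ inst)
    (y W ε : ℤ → Ω → ℝ)
    (hdecomp : ∀ s : ℤ, t - p ≤ s → s ≤ t - 1 → ∀ ω, y s ω = W s ω + ε s ω)
    (hy : ∀ s : ℤ, t - p ≤ s → s ≤ t - 1 → Measurable[𝔊 s] (y s))
    (hW : ∀ s : ℤ, t - p ≤ s → s ≤ t - 1 → Measurable[𝔊 (s - 1)] (W s))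
    (hε : ∀ s : ℤ, t - p ≤ s → s ≤ t - 1 → FullCondSupport P (𝔊 (s - 1)) (ε s))
    (δ₁ : ℝ) (δ : Fin p → ℝ) (hδ : δ ≠ 0) :
    P {ω | 0 ≤ δ₁ + ∑ j : Fin p, δ j * y (t - 1 - (j : ℕ)) ω} < 1 ∧
    P {ω | δ₁ + ∑ j : Fin p, δ j * y (t - 1 - (j : ℕ)) ω ≤ 0} < 1 := by
  have y_support (j : Fin p) :
      FullCondSupport P (𝔊 (t - 1 - (j : ℕ) - 1)) (y (t - 1 - (j : ℕ))) := by
    rw [funext (hdecomp _ (by omega) (by omega))]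
    exact (hε _ (by omega) (by omega)).measurable_add (hW _ (by omega) (by omega))
  have y_measurable (j : Fin p) : Measurable[𝔊 (t - 1 - (j : ℕ))] (y (t - 1 - (j : ℕ))) :=
    hy _ (by omega) (by omega)
  obtain ⟨i, sum_support⟩ := FullCondSupport.exists_sum_const_mul y_support
    (fun i j hij => (y_measurable j).mono (h𝔊mono (by omega)) le_rfl) hδ
  have comb_support := sum_support.measurable_add (measurable_const (a := δ₁))
  have comb_measurable : Measurable (fun ω => δ₁ + ∑ j : Fin p, δ j * y (t - 1 - (j : ℕ)) ω) :=
    (Finset.measurable_fun_sum _ fun j _ =>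
      ((y_measurable j).mono (h𝔊le _) le_rfl).const_mul _).const_add _
  exact ⟨comb_support.prob_preimage_lt_one comb_measurable.aemeasurable neg_one_lt_zero
      (B := Ici 0) (disjoint_left.2 fun _ hx hx' => hx'.2.not_ge hx),
    comb_support.prob_preimage_lt_one comb_measurable.aemeasurable zero_lt_one
      (B := Iic 0) (disjoint_left.2 fun _ hx hx' => hx'.1.not_ge hx)⟩
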